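/- Let z₁ ∈ (1/2,1) and γ > 0. The axisymmetric configuration with four interfaces (−z₁, 1/2−z₁, z₁−1/2, z₁) (which has mass 0) is a critical point of E_γ if and only if z₁/√(1−z₁²) + (z₁−1/2)/√(1−(z₁−1/2)²) = 4γ·(−z₁ log((1+z₁)/(1/2+z₁)) − (z₁−1) log((3/2−z₁)/(1−z₁))). In particular, the uniformly distributed configuration (−3/4, −1/4, 1/4, 3/4) is a critical point of E_γ exactly for γ = (3/√7 + 1/√15) / (3 log(5/7) + log 3). -/

import Mathlib

/-!
For a configuration with an even number of interfaces that is symmetric under `z ↦ -z`, the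
pattern is even off the interfaces. Hence `ξ` is odd, the potential `v` is even, and reflection
preserves the left-hand side of the Euler–Lagrange equation. With four interfaces `±a, ±b`,
`0 < b < a < 1`, criticality is therefore the single equation
`a/√(1-a²) + b/√(1-b²) = 4γ (v(a) - v(b))`. Between consecutive interfaces `ξ` is affine, so
partial fractions evaluate `v(a) - v(b) = ∫_b^a ξ(t)/(1-t²) dt`, once `ξ(0) = 0` and
`m = 2(a - b) - 1` have fixed the affine function. At `a = 3/4`, `b = 1/4` the coefficient of `γ`
is `3 log (5/7) + log 3 = log (375/343) > 0`, so the equation can be solved for `γ`.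
-/

/-- The axisymmetric step pattern with `n` interfaces located at `z 1 < ⋯ < z n`
(with `z 0 = -1`, `z (n+1) = 1`): `u(t) = (-1)^(k+1)` for `t ∈ [z k, z (k+1))`,
so `u = -1` on `[-1, z 1)`. -/
noncomputable def pattern (n : ℕ) (z : ℕ → ℝ) (t : ℝ) : ℝ :=
  (-1 : ℝ) ^ (((Finset.Icc 1 n).filter (fun i => z i ≤ t)).card + 1)

/-- The mass `m = (1/2)∫_{-1}^1 u(t) dt`. -/
noncomputable def mass (n : ℕ) (z : ℕ → ℝ) : ℝ :=
  (1 / 2) * ∫ t in (-1 : ℝ)..1, pattern n z t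

/-- `ξ(t) = ∫_{-1}^t (u(s) - m) ds`. -/
noncomputable def xi (n : ℕ) (z : ℕ → ℝ) (t : ℝ) : ℝ :=
  ∫ s in (-1 : ℝ)..t, (pattern n z s - mass n z)

/-- The potential `v(t) = ∫_0^t ξ(s)/(1-s²) ds`. -/
noncomputable def pot (n : ℕ) (z : ℕ → ℝ) (t : ℝ) : ℝ :=
  ∫ s in (0 : ℝ)..t, xi n z s / (1 - s ^ 2)

/-- `z` is an axisymmetric configuration with `n` interfaces:
`-1 = z 0 < z 1 < ⋯ < z n < z (n+1) = 1`. -/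
def IsConfig (n : ℕ) (z : ℕ → ℝ) : Prop :=
  z 0 = -1 ∧ z (n + 1) = 1 ∧ ∀ i j, i < j → j ≤ n + 1 → z i < z j

/-- The configuration is a critical point of `E_γ`: the Euler–Lagrange equation
`κ_g(z_k) + 4γ v(z_k) = λ` holds at every interface `z 1, …, z n`, with a single
constant `λ`; here `κ_g(z_k) = (-1)^(k+1) z_k / √(1 - z_k²)` is the signed geodesic
curvature of the interface circle with respect to the outer normal of `{u = 1}`. -/
def IsCritical (γ : ℝ) (n : ℕ) (z : ℕ → ℝ) : Prop :=
  ∃ lam : ℝ, ∀ k, 1 ≤ k → k ≤ n →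
    (-1 : ℝ) ^ (k + 1) * z k / Real.sqrt (1 - z k ^ 2) + 4 * γ * pot n z (z k) = lam

/-- A configuration with `n` interfaces is symmetric when the reflection `z ↦ -z` maps its
interfaces onto each other; it then exchanges the `k`-th and the `(n + 1 - k)`-th one. The
relation `i + j = n + 1` avoids truncated subtraction. -/
def IsSymmetric (n : ℕ) (z : ℕ → ℝ) : Prop :=
  ∀ i j, i + j = n + 1 → z i = -z j

/-- The left-hand side of the Euler–Lagrange equation at the `k`-th interface, that is, the
signed geodesic curvature plus `4γ` times the potential. -/
noncomputable def eulerLagrange (γ : ℝ) (n : ℕ) (z : ℕ → ℝ) (k : ℕ) : ℝ :=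
  (-1 : ℝ) ^ (k + 1) * z k / √(1 - z k ^ 2) + 4 * γ * pot n z (z k)

section Integrability

variable (n : ℕ) (z : ℕ → ℝ)

lemma measurable_pattern : Measurable (pattern n z) := by
  have hcard : Monotone fun t : ℝ => ((Finset.Icc 1 n).filter (fun i => z i ≤ t)).card :=
    fun s t hst => Finset.card_le_card <|
      Finset.monotone_filter_right _ fun i _ (hi : z i ≤ s) => hi.trans hst
  exact (measurable_from_nat (f := fun c => (-1 : ℝ) ^ (c + 1))).comp hcard.measurable

lemma abs_pattern (t : ℝ) : |pattern n z t| = 1 :=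
  abs_neg_one_pow _

lemma intervalIntegrable_pattern (x y : ℝ) :
    IntervalIntegrable (pattern n z) MeasureTheory.volume x y :=
  (intervalIntegrable_const (c := (1 : ℝ))).mono_fun
    (measurable_pattern n z).aestronglyMeasurable (.of_forall fun t => by
      simp only [Real.norm_eq_abs, abs_pattern, abs_one, le_refl])

lemma intervalIntegrable_pattern_sub_mass (x y : ℝ) :
    IntervalIntegrable (fun t => pattern n z t - mass n z) MeasureTheory.volume x y :=
  (intervalIntegrable_pattern n z x y).sub intervalIntegrable_const

lemma continuous_xi : Continuous (xi n z) :=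
  intervalIntegral.continuous_primitive (intervalIntegrable_pattern_sub_mass n z) (-1)

lemma xi_sub_xi (s t : ℝ) :
    xi n z t - xi n z s = ∫ r in s..t, (pattern n z r - mass n z) :=
  intervalIntegral.integral_interval_sub_left (intervalIntegrable_pattern_sub_mass n z _ _)
    (intervalIntegrable_pattern_sub_mass n z _ _)

lemma xi_one : xi n z 1 = 0 := by
  rw [xi, intervalIntegral.integral_sub (intervalIntegrable_pattern n z _ _)
    intervalIntegrable_const, intervalIntegral.integral_const, mass, smul_eq_mul]
  ring

lemma pot_sub_pot {x y : ℝ} (hx : x ∈ Set.Ioo (-1 : ℝ) 1) (hy : y ∈ Set.Ioo (-1 : ℝ) 1) :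
    pot n z y - pot n z x = ∫ t in x..y, xi n z t / (1 - t ^ 2) := by
  have hint {w : ℝ} (hw : w ∈ Set.Ioo (-1 : ℝ) 1) :
      IntervalIntegrable (fun t => xi n z t / (1 - t ^ 2)) MeasureTheory.volume 0 w := by
    refine ((continuous_xi n z).continuousOn.div (by fun_prop) fun t ht => ?_).intervalIntegrable
    obtain ⟨ht₁, ht₂⟩ := Set.ordConnected_Ioo.uIcc_subset (by norm_num) hw ht
    nlinarith
  exact intervalIntegral.integral_interval_sub_left (hint hy) (hint hx)

end Integrability

namespace IsConfig

variable {n k : ℕ} {z : ℕ → ℝ}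

lemma lt (h : IsConfig n z) {i j : ℕ} (hij : i < j) (hj : j ≤ n + 1) : z i < z j :=
  h.2.2 i j hij hj

lemma le (h : IsConfig n z) {i j : ℕ} (hij : i ≤ j) (hj : j ≤ n + 1) : z i ≤ z j :=
  hij.eq_or_lt.elim (fun e => e ▸ le_rfl) fun hlt => (h.lt hlt hj).le

lemma mem_Ioo (h : IsConfig n z) (hk : 1 ≤ k) (hkn : k ≤ n) : z k ∈ Set.Ioo (-1 : ℝ) 1 :=
  ⟨h.1 ▸ h.lt hk (by lia), h.2.1 ▸ h.lt (by lia) le_rfl⟩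

lemma pattern_eq_of_mem_Ico (h : IsConfig n z) (hk : k ≤ n) {t : ℝ}
    (ht : t ∈ Set.Ico (z k) (z (k + 1))) : pattern n z t = (-1) ^ (k + 1) := by
  have hfilter : (Finset.Icc 1 n).filter (fun i => z i ≤ t) = Finset.Icc 1 k := by
    ext i
    simp only [Finset.mem_filter, Finset.mem_Icc]
    constructor
    · rintro ⟨⟨hi, hin⟩, hit⟩
      refine ⟨hi, not_lt.mp fun hki => ?_⟩
      exact (ht.2.trans_le (h.le hki (by lia))).not_ge hit
    · rintro ⟨hi, hik⟩
      exact ⟨⟨hi, hik.trans hk⟩, (h.le hik (by lia)).trans ht.1⟩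
  rw [pattern, hfilter, Nat.card_Icc, Nat.add_sub_cancel]

lemma integral_pattern (h : IsConfig n z) (hk : k ≤ n) {s t : ℝ}
    (hs : s ∈ Set.Icc (z k) (z (k + 1))) (ht : t ∈ Set.Icc (z k) (z (k + 1))) :
    ∫ r in s..t, pattern n z r = (-1) ^ (k + 1) * (t - s) := by
  have hconst : (Set.uIoo s t).EqOn (pattern n z) fun _ => (-1) ^ (k + 1) := fun r hr =>
    h.pattern_eq_of_mem_Ico hk
      ⟨(le_min hs.1 ht.1).trans hr.1.le, hr.2.trans_le (max_le hs.2 ht.2)⟩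
  rw [intervalIntegral.integral_congr_uIoo hconst, intervalIntegral.integral_const, smul_eq_mul,
    mul_comm]

lemma mass_eq_sum (h : IsConfig n z) :
    mass n z = (1 / 2) * ∑ k ∈ Finset.range (n + 1), (-1) ^ (k + 1) * (z (k + 1) - z k) := by
  have hsum := intervalIntegral.sum_integral_adjacent_intervals (a := z) (n := n + 1)
    fun k _ => intervalIntegrable_pattern n z (z k) (z (k + 1))
  rw [h.1, h.2.1] at hsum
  rw [mass, ← hsum]
  congr 1
  refine Finset.sum_congr rfl fun k hk => ?_
  have hkn := Finset.mem_range_succ_iff.mp hk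
  have hle := h.le k.le_succ (by lia)
  exact h.integral_pattern hkn (Set.left_mem_Icc.mpr hle) (Set.right_mem_Icc.mpr hle)

lemma xi_eq_add_mul_sub (h : IsConfig n z) (hk : k ≤ n) {s t : ℝ}
    (hs : s ∈ Set.Icc (z k) (z (k + 1))) (ht : t ∈ Set.Icc (z k) (z (k + 1))) :
    xi n z t = xi n z s + ((-1) ^ (k + 1) - mass n z) * (t - s) := by
  rw [← sub_eq_iff_eq_add', xi_sub_xi, intervalIntegral.integral_sub
    (intervalIntegrable_pattern n z s t) intervalIntegrable_const, h.integral_pattern hk hs ht,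
    intervalIntegral.integral_const, smul_eq_mul]
  ring

end IsConfig

lemma integral_affine_div_one_sub_sq (α β : ℝ) {x y : ℝ} (hx : x ∈ Set.Ioo (-1 : ℝ) 1)
    (hy : y ∈ Set.Ioo (-1 : ℝ) 1) :
    ∫ t in x..y, (α * t + β) / (1 - t ^ 2) =
      (β - α) / 2 * Real.log ((1 + y) / (1 + x)) + (β + α) / 2 * Real.log ((1 - x) / (1 - y)) := by
  have hmem {t : ℝ} (ht : t ∈ Set.uIcc x y) : 0 < 1 + t ∧ 0 < 1 - t := by
    obtain ⟨ht₁, ht₂⟩ := Set.ordConnected_Ioo.uIcc_subset hx hy ht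
    constructor <;> linarith
  have hcont : ContinuousOn (fun t => (α * t + β) / (1 - t ^ 2)) (Set.uIcc x y) := by
    refine ContinuousOn.div (by fun_prop) (by fun_prop) fun t ht => ?_
    nlinarith [hmem ht]
  have hderiv (t : ℝ) (ht : t ∈ Set.uIcc x y) : HasDerivAt
      (fun t => (β - α) / 2 * Real.log (1 + t) - (β + α) / 2 * Real.log (1 - t))
      ((α * t + β) / (1 - t ^ 2)) t := by
    obtain ⟨hadd, hsub⟩ := hmem ht
    have dadd := (((hasDerivAt_id' t).const_add 1).log hadd.ne').const_mul ((β - α) / 2)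
    have dsub := (((hasDerivAt_id' t).const_sub 1).log hsub.ne').const_mul ((β + α) / 2)
    refine (dadd.sub dsub).congr_deriv ?_
    rw [show 1 - t ^ 2 = (1 + t) * (1 - t) by ring]
    field_simp
    ring
  obtain ⟨⟨hx₁, hx₂⟩, hy₁, hy₂⟩ := hmem Set.left_mem_uIcc, hmem Set.right_mem_uIcc
  rw [intervalIntegral.integral_eq_sub_of_hasDerivAt hderiv hcont.intervalIntegrable,
    Real.log_div hy₁.ne' hx₁.ne', Real.log_div hx₂.ne' hy₂.ne']
  ring

lemma IsConfig.pot_succ_sub_pot {n k : ℕ} {z : ℕ → ℝ} (h : IsConfig n z) (hk : 1 ≤ k)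
    (hkn : k < n) {α β : ℝ} (hα : α = (-1) ^ (k + 1) - mass n z)
    (hβ : β = xi n z (z k) - α * z k) :
    pot n z (z (k + 1)) - pot n z (z k) =
      (β - α) / 2 * Real.log ((1 + z (k + 1)) / (1 + z k)) +
        (β + α) / 2 * Real.log ((1 - z k) / (1 - z (k + 1))) := by
  have hle := h.le k.le_succ (by lia)
  have hxi : Set.EqOn (fun t => xi n z t / (1 - t ^ 2)) (fun t => (α * t + β) / (1 - t ^ 2))
      (Set.uIcc (z k) (z (k + 1))) := by
    intro t ht
    rw [Set.uIcc_of_le hle] at ht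
    simp only [h.xi_eq_add_mul_sub hkn.le (Set.left_mem_Icc.mpr hle) ht, hβ, hα]
    ring
  have hzk := h.mem_Ioo hk hkn.le
  have hzk' := h.mem_Ioo k.succ_pos hkn
  rw [pot_sub_pot n z hzk hzk', intervalIntegral.integral_congr hxi,
    integral_affine_div_one_sub_sq α β hzk hzk']

namespace IsSymmetric

variable {n : ℕ} {z : ℕ → ℝ}

/-- `z i ≤ -t` holds iff `t ≤ z (n + 1 - i)`, so the interfaces at or below `-t` are as many as
those above `t`. -/
lemma card_filter_le_neg (hz : IsSymmetric n z) {t : ℝ} (ht : ∀ k, z k ≠ t) :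
    ((Finset.Icc 1 n).filter (fun i => z i ≤ -t)).card +
      ((Finset.Icc 1 n).filter (fun i => z i ≤ t)).card = n := by
  have hreflect : ((Finset.Icc 1 n).filter (fun i => z i ≤ -t)).card =
      ((Finset.Icc 1 n).filter (fun i => ¬z i ≤ t)).card := by
    refine Finset.card_nbij' (n + 1 - ·) (n + 1 - ·) ?_ ?_ ?_ ?_
    all_goals
      simp only [Finset.coe_filter, Finset.mem_Icc]
      rintro i ⟨hi, hit⟩
      have := hz i (n + 1 - i) (by lia)
      have := (ht i).lt_or_gt
      have := (ht (n + 1 - i)).lt_or_gt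
      grind
  rw [hreflect, add_comm, Finset.card_filter_add_card_filter_not, Nat.card_Icc,
    Nat.add_sub_cancel]

lemma pattern_neg (hz : IsSymmetric n z) (hn : Even n) {t : ℝ} (ht : ∀ k, z k ≠ t) :
    pattern n z (-t) = pattern n z t := by
  refine neg_one_pow_congr ?_
  have hcard := hz.card_filter_le_neg ht
  grind

lemma xi_neg (hz : IsSymmetric n z) (hn : Even n) (t : ℝ) : xi n z (-t) = -xi n z t := by
  have hae : ∀ᵐ s, pattern n z (-s) = pattern n z s := by
    filter_upwards [(Set.countable_range z).ae_notMem MeasureTheory.volume] with s hs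
    exact hz.pattern_neg hn fun k hk => hs ⟨k, hk⟩
  calc xi n z (-t) = ∫ s in t..1, (pattern n z (-s) - mass n z) :=
        (intervalIntegral.integral_comp_neg fun s => pattern n z s - mass n z).symm
    _ = ∫ s in t..1, (pattern n z s - mass n z) :=
        intervalIntegral.integral_congr_ae (hae.mono fun s hs _ => by rw [hs])
    _ = -xi n z t := by rw [← xi_sub_xi, xi_one, zero_sub]

lemma xi_zero (hz : IsSymmetric n z) (hn : Even n) : xi n z 0 = 0 :=
  self_eq_neg.mp (by simpa only [neg_zero] using hz.xi_neg hn 0)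

lemma pot_neg (hz : IsSymmetric n z) (hn : Even n) (t : ℝ) : pot n z (-t) = pot n z t := by
  calc pot n z (-t) = -∫ s in (-t)..(-0), xi n z s / (1 - s ^ 2) := by
        rw [neg_zero, ← intervalIntegral.integral_symm, pot]
    _ = -∫ s in (0 : ℝ)..t, xi n z (-s) / (1 - (-s) ^ 2) := by
        rw [intervalIntegral.integral_comp_neg fun s => xi n z s / (1 - s ^ 2)]
    _ = pot n z t := by
        simp only [hz.xi_neg hn, neg_sq, neg_div, intervalIntegral.integral_neg, neg_neg, pot]

lemma eulerLagrange_eq (hz : IsSymmetric n z) (hn : Even n) (γ : ℝ) {i j : ℕ}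
    (hij : i + j = n + 1) : eulerLagrange γ n z i = eulerLagrange γ n z j := by
  have hsign : (-1 : ℝ) ^ (i + 1) = -(-1) ^ (j + 1) := by
    rw [neg_eq_neg_one_mul ((-1 : ℝ) ^ (j + 1)), ← pow_succ']
    exact neg_one_pow_congr (by grind)
  rw [eulerLagrange, eulerLagrange, hz i j hij, hz.pot_neg hn, hsign, neg_mul_neg, neg_sq]

end IsSymmetric

section FourInterfaces

variable {z : ℕ → ℝ}

lemma IsSymmetric.isCritical_four_iff_eulerLagrange_eq (hz : IsSymmetric 4 z) (γ : ℝ) :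
    IsCritical γ 4 z ↔ eulerLagrange γ 4 z 3 = eulerLagrange γ 4 z 4 := by
  have h₁₄ := hz.eulerLagrange_eq (by decide) γ (i := 1) (j := 4) rfl
  have h₂₃ := hz.eulerLagrange_eq (by decide) γ (i := 2) (j := 3) rfl
  constructor
  · rintro ⟨lam, hlam⟩
    exact (hlam 3 (by lia) (by lia)).trans (hlam 4 (by lia) (by lia)).symm
  · intro h₃₄
    refine ⟨eulerLagrange γ 4 z 4, fun k hk hk4 => ?_⟩
    change eulerLagrange γ 4 z k = _
    interval_cases k
    exacts [h₁₄, h₂₃.trans h₃₄, h₃₄, rfl]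

lemma IsConfig.apply_three_pos (h : IsConfig 4 z) (hz : IsSymmetric 4 z) : 0 < z 3 := by
  linarith [hz 2 3 rfl, h.lt (show 2 < 3 by lia) (by lia)]

lemma IsConfig.mass_four (h : IsConfig 4 z) (hz : IsSymmetric 4 z) :
    mass 4 z = 2 * (z 4 - z 3) - 1 := by
  simp only [h.mass_eq_sum, Finset.sum_range_succ, Finset.sum_range_zero, h.1, h.2.1, hz 1 4 rfl,
    hz 2 3 rfl]
  ring

lemma IsConfig.xi_apply_three (h : IsConfig 4 z) (hz : IsSymmetric 4 z) :
    xi 4 z (z 3) = -(1 + mass 4 z) * z 3 := by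
  have h₃ := h.apply_three_pos hz
  have hzero : (0 : ℝ) ∈ Set.Icc (z 2) (z 3) := ⟨by linarith [hz 2 3 rfl], h₃.le⟩
  have hthree : z 3 ∈ Set.Icc (z 2) (z 3) := Set.right_mem_Icc.mpr (hzero.1.trans hzero.2)
  rw [h.xi_eq_add_mul_sub (by lia) hzero hthree, hz.xi_zero (by decide)]
  ring

lemma IsConfig.pot_four_sub_pot_three (h : IsConfig 4 z) (hz : IsSymmetric 4 z) :
    pot 4 z (z 4) - pot 4 z (z 3) =
      (z 4 - 2 * z 3 - 1) * Real.log ((1 + z 4) / (1 + z 3)) -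
        (z 4 - 1) * Real.log ((1 - z 3) / (1 - z 4)) := by
  have hmass := h.mass_four hz
  rw [h.pot_succ_sub_pot (k := 3) (by lia) (by lia) (α := 2 * (1 - z 4 + z 3)) (β := -2 * z 3)
    (by rw [hmass]; ring) (by rw [h.xi_apply_three hz, hmass]; ring)]
  ring

theorem four_interface_criticality_general (h : IsConfig 4 z) (hz : IsSymmetric 4 z) (γ : ℝ) :
    IsCritical γ 4 z ↔
      z 4 / √(1 - z 4 ^ 2) + z 3 / √(1 - z 3 ^ 2) =
        4 * γ * ((z 4 - 2 * z 3 - 1) * Real.log ((1 + z 4) / (1 + z 3)) -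
          (z 4 - 1) * Real.log ((1 - z 3) / (1 - z 4))) := by
  rw [hz.isCritical_four_iff_eulerLagrange_eq, ← h.pot_four_sub_pot_three hz]
  simp only [eulerLagrange]
  constructor <;> intro heq <;> ring_nf at heq ⊢ <;> linarith

end FourInterfaces

/-- The mass-zero symmetric configuration `(-z₁, 1/2 - z₁, z₁ - 1/2, z₁)`, padded by `-1` at
index `0` and by `1` from index `5` on. -/
noncomputable def massZeroConfig (z₁ : ℝ) : ℕ → ℝ :=
  fun k => if k = 0 then -1 else if k = 1 then -z₁ else if k = 2 then 1 / 2 - z₁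
    else if k = 3 then z₁ - 1 / 2 else if k = 4 then z₁ else 1

lemma isConfig_massZeroConfig {z₁ : ℝ} (h : z₁ ∈ Set.Ioo (1 / 2 : ℝ) 1) :
    IsConfig 4 (massZeroConfig z₁) := by
  obtain ⟨h₁, h₂⟩ := h
  refine ⟨by simp [massZeroConfig], by simp [massZeroConfig], fun i j hij hj => ?_⟩
  interval_cases j <;> interval_cases i <;> norm_num [massZeroConfig] <;> linarith

lemma isSymmetric_massZeroConfig (z₁ : ℝ) : IsSymmetric 4 (massZeroConfig z₁) := by
  intro i j hij
  obtain rfl : i = 5 - j := by lia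
  have hj : j ≤ 5 := by lia
  interval_cases j <;> simp [massZeroConfig]

lemma isCritical_massZeroConfig_iff {z₁ : ℝ} (h : z₁ ∈ Set.Ioo (1 / 2 : ℝ) 1) (γ : ℝ) :
    IsCritical γ 4 (massZeroConfig z₁) ↔
      z₁ / √(1 - z₁ ^ 2) + (z₁ - 1 / 2) / √(1 - (z₁ - 1 / 2) ^ 2) =
        4 * γ * (-z₁ * Real.log ((1 + z₁) / (1 / 2 + z₁)) -
          (z₁ - 1) * Real.log ((3 / 2 - z₁) / (1 - z₁))) := by
  have h₃ : massZeroConfig z₁ 3 = z₁ - 1 / 2 := rfl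
  have h₄ : massZeroConfig z₁ 4 = z₁ := rfl
  rw [four_interface_criticality_general (isConfig_massZeroConfig h)
    (isSymmetric_massZeroConfig z₁), h₃, h₄]
  ring_nf

lemma three_mul_log_add_log_pos : 0 < 3 * Real.log (5 / 7) + Real.log 3 := by
  have hlog : 3 * Real.log (5 / 7) + Real.log 3 = Real.log (375 / 343) := by
    rw [show (375 / 343 : ℝ) = (5 / 7) ^ 3 * 3 by norm_num,
      Real.log_mul (by norm_num) (by norm_num), Real.log_pow, Nat.cast_ofNat]
  rw [hlog]
  exact Real.log_pos (by norm_num)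

lemma isCritical_massZeroConfig_three_quarters_iff (γ : ℝ) :
    IsCritical γ 4 (massZeroConfig (3 / 4)) ↔
      γ = (3 / √7 + 1 / √15) / (3 * Real.log (5 / 7) + Real.log 3) := by
  have hsqrt (x : ℝ) : √(x / 16) = √x / 4 := by
    rw [Real.sqrt_div' x (by norm_num), show (16 : ℝ) = 4 ^ 2 by norm_num,
      Real.sqrt_sq (by norm_num)]
  have hcurv : (3 / 4 : ℝ) / √(1 - (3 / 4) ^ 2) + (3 / 4 - 1 / 2) / √(1 - (3 / 4 - 1 / 2) ^ 2) =
      3 / √7 + 1 / √15 := by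
    rw [show (1 - (3 / 4) ^ 2 : ℝ) = 7 / 16 by norm_num,
      show (1 - (3 / 4 - 1 / 2) ^ 2 : ℝ) = 15 / 16 by norm_num, hsqrt, hsqrt]
    ring
  have hpot : 4 * γ * (-(3 / 4) * Real.log ((1 + 3 / 4) / (1 / 2 + 3 / 4)) -
      (3 / 4 - 1) * Real.log ((3 / 2 - 3 / 4) / (1 - 3 / 4))) =
      γ * (3 * Real.log (5 / 7) + Real.log 3) := by
    rw [show ((1 + 3 / 4) / (1 / 2 + 3 / 4) : ℝ) = (5 / 7)⁻¹ by norm_num, Real.log_inv,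
      show ((3 / 2 - 3 / 4) / (1 - 3 / 4) : ℝ) = 3 by norm_num]
    ring
  rw [isCritical_massZeroConfig_iff (by norm_num), hcurv, hpot,
    eq_div_iff three_mul_log_add_log_pos.ne', eq_comm]

/-- For `z₁ ∈ (1/2,1)` and `γ > 0`, the axisymmetric configuration
with four interfaces `(-z₁, 1/2−z₁, z₁−1/2, z₁)` (which has mass 0) is a critical point
of `E_γ` iff `z₁/√(1−z₁²) + (z₁−1/2)/√(1−(z₁−1/2)²)
= 4γ(−z₁ log((1+z₁)/(1/2+z₁)) − (z₁−1) log((3/2−z₁)/(1−z₁)))`.  In particular, for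
`z₁ = 3/4` (the uniformly distributed configuration `(-3/4,-1/4,1/4,3/4)`) criticality
holds exactly for `γ = (3/√7 + 1/√15)/(3 log(5/7) + log 3)`. -/
theorem four_interface_criticality (z₁ : ℝ) (hz₁ : z₁ ∈ Set.Ioo (1 / 2 : ℝ) 1)
    (γ : ℝ) (hγ : 0 < γ) :
    (IsCritical γ 4
        (fun k => if k = 0 then -1 else if k = 1 then -z₁ else if k = 2 then 1 / 2 - z₁
          else if k = 3 then z₁ - 1 / 2 else if k = 4 then z₁ else 1) ↔
      z₁ / Real.sqrt (1 - z₁ ^ 2) + (z₁ - 1 / 2) / Real.sqrt (1 - (z₁ - 1 / 2) ^ 2)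
        = 4 * γ * (-z₁ * Real.log ((1 + z₁) / (1 / 2 + z₁))
            - (z₁ - 1) * Real.log ((3 / 2 - z₁) / (1 - z₁)))) ∧
    (z₁ = 3 / 4 →
      (IsCritical γ 4
          (fun k => if k = 0 then -1 else if k = 1 then -z₁ else if k = 2 then 1 / 2 - z₁
            else if k = 3 then z₁ - 1 / 2 else if k = 4 then z₁ else 1) ↔
        γ = (3 / Real.sqrt 7 + 1 / Real.sqrt 15)
              / (3 * Real.log (5 / 7) + Real.log 3))) := by
  refine ⟨isCritical_massZeroConfig_iff hz₁ γ, ?_⟩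
  rintro rfl
  exact isCritical_massZeroConfig_three_quarters_iff γ
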